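/- Let G be a finite group, let (σ_j)_{j∈J} be a complete family of irreducibles for G, let M ⊆ G be a conjugacy class of involutions with representative m₀, let k ≥ 1, let (ρ_i)_{i∈T} be a complete family of irreducibles for G^k acting on spaces V_i of dimensions d_i, and for each i let B_i be an orthonormal basis of V_i. Let Λ ⊆ J, P(Λ) = Σ_{j∈Λ} d_j²/|G|, and let λ ≥ 0 be a real number with |χ_j(m₀)| ≤ λ·d_j for every j ∈ J \ Λ. Then Σ_{i∈T} (d_i²/|G|^k) · (1/d_i) Σ_{b∈B_i} Var_{m∈M} ‖Π_m^{(i)} b‖² ≤ λ + P(Λ) · Σ_{j∈J} d_j, where Π_m^{(i)} = 2^{-k} Σ_{I ⊆ {1,…,k}} ρ_i(m^I). -/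

import Mathlib

noncomputable section

open scoped BigOperators InnerProductSpace

def IsUnitaryRep {G V : Type*} [Group G] [NormedAddCommGroup V] [InnerProductSpace ℂ V]
    (ρ : Representation ℂ G V) : Prop :=
  ∀ (g : G) (v w : V), ⟪ρ g v, ρ g w⟫_ℂ = ⟪v, w⟫_ℂ

def IsIrreducibleRep {G V : Type*} [Group G] [AddCommGroup V] [Module ℂ V]
    (ρ : Representation ℂ G V) : Prop :=
  (∃ v : V, v ≠ 0) ∧
    ∀ W : Submodule ℂ V, (∀ (g : G) (v : V), v ∈ W → ρ g v ∈ W) → W = ⊥ ∨ W = ⊤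

def RepIso {G V₁ V₂ : Type*} [Group G] [AddCommGroup V₁] [Module ℂ V₁]
    [AddCommGroup V₂] [Module ℂ V₂]
    (ρ₁ : Representation ℂ G V₁) (ρ₂ : Representation ℂ G V₂) : Prop :=
  ∃ e : V₁ ≃ₗ[ℂ] V₂, ∀ (g : G) (v : V₁), e (ρ₁ g v) = ρ₂ g (e v)

def repChar {G V : Type*} [Group G] [AddCommGroup V] [Module ℂ V]
    (ρ : Representation ℂ G V) (g : G) : ℂ := LinearMap.trace ℂ V (ρ g)

def IsCompleteFamily {G : Type*} [Group G] {J : Type*}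
    (W : J → Type*) [∀ j, NormedAddCommGroup (W j)] [∀ j, InnerProductSpace ℂ (W j)]
    [∀ j, FiniteDimensional ℂ (W j)]
    (σ : ∀ j, Representation ℂ G (W j)) : Prop :=
  (∀ j, IsUnitaryRep (σ j)) ∧ (∀ j, IsIrreducibleRep (σ j)) ∧
    (∀ j j', j ≠ j' → ¬ RepIso (σ j) (σ j')) ∧
    (∀ (U : Type) [AddCommGroup U] [Module ℂ U] [FiniteDimensional ℂ U]
      (τ : Representation ℂ G U), IsIrreducibleRep τ → ∃ j, RepIso τ (σ j))

def isoProj {G V : Type*} [Group G] [Fintype G] [AddCommGroup V] [Module ℂ V]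
    (d : ℕ) (χ : G → ℂ) (ρ : Representation ℂ G V) : V →ₗ[ℂ] V :=
  ((d : ℂ) / (Fintype.card G : ℂ)) • ∑ g : G, starRingEnd ℂ (χ g) • (ρ g : V →ₗ[ℂ] V)

def onI {G : Type*} [One G] {k : ℕ} (g : G) (I : Finset (Fin k)) : Fin k → G :=
  fun i => if i ∈ I then g else 1

def invProj {G V : Type*} [Group G] [AddCommGroup V] [Module ℂ V] {k : ℕ}
    (ρ : Representation ℂ (Fin k → G) V) (m : G) : V →ₗ[ℂ] V :=
  ((2 : ℂ) ^ k)⁻¹ • ∑ I : Finset (Fin k), (ρ (onI m I) : V →ₗ[ℂ] V)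

def isoProjI {G V : Type*} [Group G] [Fintype G] [AddCommGroup V] [Module ℂ V] {k : ℕ}
    (ρ : Representation ℂ (Fin k → G) V) (d : ℕ) (χ : G → ℂ) (I : Finset (Fin k)) :
    V →ₗ[ℂ] V :=
  ((d : ℂ) / (Fintype.card G : ℂ)) • ∑ g : G, starRingEnd ℂ (χ g) • (ρ (onI g I) : V →ₗ[ℂ] V)

/-!
For unitary `ρ` and an involution `m`, `Π_m` is the orthogonal projection onto the vectors fixed by
all `ρ (m^I)`, so `‖Π_m b‖² = ⟪b, Π_m b⟫` is the average over `I` of the real numbers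
`Re ⟪b, ρ (m^I) b⟫`. The variance is a convex function of the random variable, so it suffices to
bound, for each `I` separately, the variance of `m ↦ Re ⟪b, ρ (m^I) b⟫`; it vanishes for `I = ∅`.
For `I ≠ ∅` it is at most the average of `‖f m‖²` over `m ∈ M`, where `f g = ⟪b, ρ (g^I) b⟫` is
a positive definite function on `G` with `f 1 = 1`.

Expand the positive definite function `F = ‖f‖²` in characters of `G`. Its Fourier transforms
`σ_j(F) = Σ_g F g • σ_j g` are positive operators, so `Σ_j d_j ‖tr σ_j(F)‖ = |G| F 1`, and bounding
`‖χ_j m₀‖` by `λ d_j` off `Λ` and by `d_j` on `Λ` gives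
`E_{m ∈ M} F m ≤ λ + P(Λ) Σ_g ‖f g‖²`. Plancherel together with `tr A² ≤ (tr A)²` for `A ≥ 0`
yields `Σ_g ‖f g‖² ≤ Σ_j ‖tr σ_j(f)‖`. The right-hand side is linear on positive definite `f`,
because there the traces are nonnegative, and the Plancherel average of the matrix coefficients
`f` over all `i` and `b ∈ B_i` is the indicator function of `1 ∈ G`, whose transforms have trace
`d_j`.
-/

section Irreducible

open Representation

variable {G V V₁ V₂ : Type*} [Group G] [AddCommGroup V] [Module ℂ V]
  [AddCommGroup V₁] [Module ℂ V₁] [AddCommGroup V₂] [Module ℂ V₂]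
  {ρ : Representation ℂ G V} {ρ₁ : Representation ℂ G V₁} {ρ₂ : Representation ℂ G V₂}

theorem IsIrreducibleRep.isIrreducible (h : IsIrreducibleRep ρ) : ρ.IsIrreducible := by
  obtain ⟨⟨v, hv⟩, hsimple⟩ := h
  refine { exists_pair_ne := ⟨⊥, ⊤, fun h => hv ?_⟩, eq_bot_or_eq_top := fun S => ?_ }
  · have h' : (⊥ : Submodule ℂ V) = ⊤ := congrArg (·.toSubmodule) h
    exact (Submodule.mem_bot ℂ).mp (h' ▸ Submodule.mem_top)
  · exact (hsimple S.toSubmodule fun g _ hw => S.apply_mem_toSubmodule g hw).imp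
      (fun h => Subrepresentation.toSubmodule_injective h)
      (fun h => Subrepresentation.toSubmodule_injective h)

theorem RepIso.of_equiv (e : ρ₁.Equiv ρ₂) : RepIso ρ₁ ρ₂ :=
  ⟨e.toLinearEquiv, fun g v => LinearMap.congr_fun (e.isIntertwining' g) v⟩

theorem RepIso.trans {V₃ : Type*} [AddCommGroup V₃] [Module ℂ V₃] {ρ₃ : Representation ℂ G V₃}
    (h₁₂ : RepIso ρ₁ ρ₂) (h₂₃ : RepIso ρ₂ ρ₃) : RepIso ρ₁ ρ₃ := by
  obtain ⟨e, he⟩ := h₁₂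
  obtain ⟨e', he'⟩ := h₂₃
  exact ⟨e.trans e', fun g v => by simp only [LinearEquiv.trans_apply, he, he']⟩

theorem IsIrreducibleRep.of_repIso (hρ : IsIrreducibleRep ρ₁) (h : RepIso ρ₁ ρ₂) :
    IsIrreducibleRep ρ₂ := by
  obtain ⟨e, he⟩ := h
  obtain ⟨⟨v, hv⟩, hsimple⟩ := hρ
  refine ⟨⟨e v, e.map_ne_zero_iff.mpr hv⟩, fun W hW => ?_⟩
  have hcomap := hsimple ((Submodule.orderIsoMapComap e).symm W) fun g w hw => by
    change e (ρ₁ g w) ∈ W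
    exact he g w ▸ hW g (e w) hw
  simpa only [map_eq_bot_iff, map_eq_top_iff] using hcomap

theorem exists_repIso_fin [FiniteDimensional ℂ V] (ρ : Representation ℂ G V) :
    ∃ ρ' : Representation ℂ G (Fin (Module.finrank ℂ V) → ℂ), RepIso ρ ρ' :=
  let e := (Module.finBasis ℂ V).equivFun
  ⟨e.conjRingEquiv.toMonoidHom.comp ρ, e, fun g v => by simp⟩

theorem isIrreducibleRep_ofModule' (S : Type*) [AddCommGroup S] [Module ℂ S]
    [Module (MonoidAlgebra ℂ G) S] [IsScalarTower ℂ (MonoidAlgebra ℂ G) S]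
    [IsSimpleModule (MonoidAlgebra ℂ G) S] :
    IsIrreducibleRep (ofModule' (k := ℂ) (G := G) S) := by
  have := IsSimpleModule.nontrivial (MonoidAlgebra ℂ G) S
  refine ⟨exists_ne 0, fun W hW => ?_⟩
  let W' : Submodule (MonoidAlgebra ℂ G) S :=
    MonoidAlgebra.submoduleOfSMulMem W fun g v hv => hW g v hv
  exact (eq_bot_or_eq_top W').imp
    (congrArg (Submodule.restrictScalars ℂ)) (congrArg (Submodule.restrictScalars ℂ))

theorem asAlgebraHom_ofModule' (S : Type*) [AddCommGroup S] [Module ℂ S]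
    [Module (MonoidAlgebra ℂ G) S] [IsScalarTower ℂ (MonoidAlgebra ℂ G) S]
    (a : MonoidAlgebra ℂ G) : (ofModule' (k := ℂ) (G := G) S).asAlgebraHom a =
      Algebra.lsmul ℂ ℂ S a := by
  rw [asAlgebraHom_def, ofModule', Equiv.apply_symm_apply]

end Irreducible

namespace IsCompleteFamily

variable {G : Type*} [Group G] {J : Type*}
  {W : J → Type*} [∀ j, NormedAddCommGroup (W j)] [∀ j, InnerProductSpace ℂ (W j)]
  [∀ j, FiniteDimensional ℂ (W j)] {σ : ∀ j, Representation ℂ G (W j)}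

theorem isUnitaryRep (hσ : IsCompleteFamily W σ) (j : J) : IsUnitaryRep (σ j) := hσ.1 j

theorem isIrreducible (hσ : IsCompleteFamily W σ) (j : J) : (σ j).IsIrreducible :=
  (hσ.2.1 j).isIrreducible

theorem finrank_ne_zero (hσ : IsCompleteFamily W σ) (j : J) :
    (Module.finrank ℂ (W j) : ℂ) ≠ 0 := by
  obtain ⟨v, hv⟩ := (hσ.2.1 j).1
  have := nontrivial_of_ne v 0 hv
  exact Nat.cast_ne_zero.mpr Module.finrank_pos.ne'

-- The completeness clause of `IsCompleteFamily` speaks about spaces in `Type` only; coordinates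
-- carry it over to every universe.
theorem exists_repIso (hσ : IsCompleteFamily W σ) {U : Type*} [AddCommGroup U] [Module ℂ U]
    [FiniteDimensional ℂ U] (τ : Representation ℂ G U) (hτ : IsIrreducibleRep τ) :
    ∃ j, RepIso τ (σ j) := by
  obtain ⟨τ', hττ'⟩ := exists_repIso_fin τ
  obtain ⟨j, hj⟩ := hσ.2.2.2 _ τ' (hτ.of_repIso hττ')
  exact ⟨j, hττ'.trans hj⟩

theorem nonempty_equiv_iff (hσ : IsCompleteFamily W σ) {i j : J} :
    Nonempty ((σ i).Equiv (σ j)) ↔ i = j := by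
  refine ⟨fun ⟨e⟩ => not_imp_comm.mp (hσ.2.2.1 i j) (not_not_intro (.of_equiv e)), ?_⟩
  rintro rfl
  exact ⟨.refl _⟩

end IsCompleteFamily

section Fourier

variable {G V V₁ V₂ : Type*} [Group G] [Fintype G] [AddCommGroup V] [Module ℂ V]
  [AddCommGroup V₁] [Module ℂ V₁] [AddCommGroup V₂] [Module ℂ V₂]

/-- The Fourier transform `∑ g, f g • ρ g` of a function `f : G → ℂ` at a representation `ρ`,
without normalisation. -/
def fourierTransform (ρ : Representation ℂ G V) : (G → ℂ) →ₗ[ℂ] Module.End ℂ V :=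
  Fintype.linearCombination ℂ ρ

theorem fourierTransform_apply (ρ : Representation ℂ G V) (f : G → ℂ) :
    fourierTransform ρ f = ∑ g, f g • ρ g := rfl

theorem fourierTransform_single_one [DecidableEq G] (ρ : Representation ℂ G V) :
    fourierTransform ρ (Pi.single 1 1) = 1 := by
  simp [fourierTransform, Fintype.linearCombination_apply_single]

theorem asAlgebraHom_ofCoeff (ρ : Representation ℂ G V) (f : G → ℂ) :
    ρ.asAlgebraHom (.ofCoeff (Finsupp.equivFunOnFinite.symm f)) = fourierTransform ρ f := by
  rw [Representation.asAlgebraHom_def, MonoidAlgebra.lift_apply]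
  exact Finsupp.sum_fintype _ _ fun g => zero_smul _ _

theorem RepIso.fourierTransform_eq_zero {ρ₁ : Representation ℂ G V₁} {ρ₂ : Representation ℂ G V₂}
    (h : RepIso ρ₁ ρ₂) {f : G → ℂ} (hf : fourierTransform ρ₂ f = 0) :
    fourierTransform ρ₁ f = 0 := by
  obtain ⟨e, he⟩ := h
  refine LinearMap.ext fun v => e.injective ?_
  have := LinearMap.congr_fun hf (e v)
  simpa [fourierTransform_apply, he] using this

end Fourier

namespace IsCompleteFamily

variable {G : Type*} [Group G] [Fintype G] {J : Type*}
  {W : J → Type*} [∀ j, NormedAddCommGroup (W j)] [∀ j, InnerProductSpace ℂ (W j)]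
  [∀ j, FiniteDimensional ℂ (W j)] {σ : ∀ j, Representation ℂ G (W j)}

-- An element of `ℂ[G]` killed by all irreducibles annihilates every simple left ideal, hence all of
-- `ℂ[G]`, which is semisimple by Maschke's theorem.
theorem eq_zero_of_fourierTransform_eq_zero (hσ : IsCompleteFamily W σ) {f : G → ℂ}
    (hf : ∀ j, fourierTransform (σ j) f = 0) : f = 0 := by
  let a : MonoidAlgebra ℂ G := .ofCoeff (Finsupp.equivFunOnFinite.symm f)
  have ha : a ∈ (⊤ : Submodule (MonoidAlgebra ℂ G) (MonoidAlgebra ℂ G)).annihilator := by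
    rw [← IsSemisimpleModule.sSup_simples_eq_top, sSup_eq_iSup', Submodule.annihilator_iSup,
      Submodule.mem_iInf]
    rintro ⟨S, hS : IsSimpleModule _ S⟩
    obtain ⟨j, hj⟩ := hσ.exists_repIso (Representation.ofModule' (k := ℂ) (G := G) S)
      (isIrreducibleRep_ofModule' S)
    refine Submodule.mem_annihilator.mpr fun s hs => ?_
    have h := LinearMap.congr_fun (hj.fourierTransform_eq_zero (hf j)) ⟨s, hs⟩
    rw [← asAlgebraHom_ofCoeff, asAlgebraHom_ofModule'] at h
    exact congrArg Subtype.val h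
  have h1 : a = 0 := by simpa using Submodule.mem_annihilator.mp ha 1 Submodule.mem_top
  exact funext fun g => congrArg (fun b : MonoidAlgebra ℂ G => b.coeff g) h1

end IsCompleteFamily

section ClassFunction

variable {G V : Type*} [Group G] [AddCommGroup V] [Module ℂ V]
  (ρ : Representation ℂ G V)

theorem finrank_smul_eq_trace_smul_one [FiniteDimensional ℂ V] [ρ.IsIrreducible]
    {A : Module.End ℂ V} (hA : ∀ g, Commute A (ρ g)) :
    (Module.finrank ℂ V : ℂ) • A = LinearMap.trace ℂ V A • 1 := by
  let A' : ρ.IntertwiningMap ρ := ⟨A, fun g => hA g⟩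
  obtain ⟨c, hc⟩ :=
    (Representation.IsIrreducible.algebraMap_intertwiningMap_bijective_of_isAlgClosed (ρ := ρ)).2 A'
  have hc' : A = c • 1 := (congrArg (·.toLinearMap) hc).symm
  rw [hc', map_smul, LinearMap.trace_one, smul_smul, smul_eq_mul, mul_comm]

variable [Fintype G]

theorem trace_fourierTransform (f : G → ℂ) :
    LinearMap.trace ℂ V (fourierTransform ρ f) = ∑ g, f g * ρ.character g := by
  simp only [fourierTransform_apply, map_sum, map_smul, smul_eq_mul, Representation.character]

theorem commute_fourierTransform {f : G → ℂ} (hf : ∀ g h, f (h * g * h⁻¹) = f g) (h : G) :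
    Commute (fourierTransform ρ f) (ρ h) := by
  rw [Commute, SemiconjBy, fourierTransform_apply, Finset.sum_mul, Finset.mul_sum]
  refine Fintype.sum_equiv (MulAut.conj h⁻¹).toEquiv _ _ fun g => ?_
  have hg : f (h⁻¹ * (g * h)) = f g := by simpa [mul_assoc] using hf g h⁻¹
  simp [hg, ← map_mul, mul_assoc]

theorem finrank_smul_fourierTransform [FiniteDimensional ℂ V] [ρ.IsIrreducible] {f : G → ℂ}
    (hf : ∀ g h, f (h * g * h⁻¹) = f g) :
    (Module.finrank ℂ V : ℂ) • fourierTransform ρ f = (∑ g, f g * ρ.character g) • 1 := by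
  rw [finrank_smul_eq_trace_smul_one ρ (commute_fourierTransform ρ hf), trace_fourierTransform]

end ClassFunction

namespace IsCompleteFamily

variable {G : Type*} [Group G] [Fintype G] {J : Type*}
  {W : J → Type*} [∀ j, NormedAddCommGroup (W j)] [∀ j, InnerProductSpace ℂ (W j)]
  [∀ j, FiniteDimensional ℂ (W j)] {σ : ∀ j, Representation ℂ G (W j)}

theorem sum_character_inv_mul_character [DecidableEq J] (hσ : IsCompleteFamily W σ) (i j : J) :
    ∑ g, (σ j).character g⁻¹ * (σ i).character g = if i = j then (Fintype.card G : ℂ) else 0 := by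
  have hcard : (Nat.card G : ℂ) ≠ 0 := Nat.cast_ne_zero.mpr Nat.card_pos.ne'
  have := invertibleOfNonzero hcard
  have := hσ.isIrreducible i
  have := hσ.isIrreducible j
  have h := Representation.char_orthonormal (σ i) (σ j)
  rw [inv_mul_eq_iff_eq_mul₀ hcard] at h
  simp only [hσ.nonempty_equiv_iff] at h
  simpa [mul_comm, eq_comm (a := i)] using h

theorem finrank_smul_fourierTransform_character [DecidableEq J] (hσ : IsCompleteFamily W σ)
    (i j : J) :
    (Module.finrank ℂ (W j) : ℂ) • fourierTransform (σ i) (fun g => (σ j).character g⁻¹) =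
      if i = j then (Fintype.card G : ℂ) • 1 else 0 := by
  have := hσ.isIrreducible i
  have h := finrank_smul_fourierTransform (σ i) (f := fun g => (σ j).character g⁻¹) fun g h => by
    rw [mul_inv_rev, mul_inv_rev, inv_inv, ← mul_assoc, Representation.char_conj]
  rw [hσ.sum_character_inv_mul_character] at h
  split_ifs at h ⊢ with hij
  · exact hij ▸ h
  · rw [zero_smul, smul_eq_zero_iff_right (hσ.finrank_ne_zero i)] at h
    rw [h, smul_zero]

variable [Fintype J]

theorem sum_finrank_mul_character [DecidableEq G] (hσ : IsCompleteFamily W σ) (g : G) :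
    ∑ j, (Module.finrank ℂ (W j) : ℂ) * (σ j).character g =
      if g = 1 then (Fintype.card G : ℂ) else 0 := by
  classical
  have h : (Fintype.card G : ℂ) • Pi.single 1 1 -
      ∑ j, (Module.finrank ℂ (W j) : ℂ) • (fun g => (σ j).character g⁻¹) = 0 := by
    refine hσ.eq_zero_of_fourierTransform_eq_zero fun i => ?_
    rw [map_sub, map_smul, fourierTransform_single_one, map_sum]
    simp only [map_smul, hσ.finrank_smul_fourierTransform_character, Finset.sum_ite_eq,
      Finset.mem_univ, if_true, sub_self]
  have hg := congrFun (sub_eq_zero.mp h) g⁻¹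
  simpa [Pi.single_apply, eq_comm] using hg

theorem sum_finrank_mul_trace_fourierTransform_mul (hσ : IsCompleteFamily W σ) (f₁ f₂ : G → ℂ) :
    ∑ j, (Module.finrank ℂ (W j) : ℂ) *
        LinearMap.trace ℂ (W j) (fourierTransform (σ j) f₁ * fourierTransform (σ j) f₂) =
      Fintype.card G * ∑ g, f₁ g⁻¹ * f₂ g := by
  classical
  have htrace (j : J) :
      LinearMap.trace ℂ (W j) (fourierTransform (σ j) f₁ * fourierTransform (σ j) f₂) =
        ∑ h, ∑ g, f₁ h * f₂ g * (σ j).character (h * g) := by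
    simp only [fourierTransform_apply, Finset.sum_mul_sum, smul_mul_smul_comm, ← map_mul, map_sum,
      map_smul, smul_eq_mul, Representation.character]
  calc _ = ∑ h, ∑ g, f₁ h * f₂ g *
          ∑ j, (Module.finrank ℂ (W j) : ℂ) * (σ j).character (h * g) := by
        simp only [htrace, Finset.mul_sum]
        rw [Finset.sum_comm]
        refine Finset.sum_congr rfl fun h _ => ?_
        rw [Finset.sum_comm]
        exact Finset.sum_congr rfl fun g _ => Finset.sum_congr rfl fun j _ => by ring
    _ = Fintype.card G * ∑ g, f₁ g⁻¹ * f₂ g := by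
        rw [Finset.sum_comm, Finset.mul_sum]
        refine Finset.sum_congr rfl fun g _ => ?_
        simp [hσ.sum_finrank_mul_character, mul_eq_one_iff_eq_inv, mul_comm]

theorem sum_finrank_mul_trace_fourierTransform (hσ : IsCompleteFamily W σ) (f : G → ℂ) :
    ∑ j, (Module.finrank ℂ (W j) : ℂ) * LinearMap.trace ℂ (W j) (fourierTransform (σ j) f) =
      Fintype.card G * f 1 := by
  classical
  simp only [trace_fourierTransform, Finset.mul_sum]
  rw [Finset.sum_comm]
  simp only [mul_left_comm _ (f _), ← Finset.mul_sum, hσ.sum_finrank_mul_character]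
  simp [mul_comm]

theorem card_mul_sum_conjClass (hσ : IsCompleteFamily W σ) {M : Finset G} {m₀ : G}
    (hM : ∀ m, m ∈ M ↔ IsConj m₀ m) (f : G → ℂ) :
    Fintype.card G * ∑ m ∈ M, f m = M.card * ∑ j, (σ j).character m₀⁻¹ *
        LinearMap.trace ℂ (W j) (fourierTransform (σ j) f) := by
  classical
  have hχ (j : J) (m : G) (hm : m ∈ M) : (σ j).character m⁻¹ = (σ j).character m₀⁻¹ := by
    obtain ⟨c, rfl⟩ := isConj_iff.mp ((hM m).mp hm)
    rw [← Representation.char_conj _ m₀⁻¹ c, conj_inv]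
  let u : G → ℂ := fun g => if g⁻¹ ∈ M then 1 else 0
  have hu (g h : G) : u (h * g * h⁻¹) = u g := by
    have hconj : IsConj g⁻¹ (h * g * h⁻¹)⁻¹ := isConj_iff.mpr ⟨h, by group⟩
    have hmem : (h * g * h⁻¹)⁻¹ ∈ M ↔ g⁻¹ ∈ M := by
      rw [hM, hM]
      exact ⟨fun hg => hg.trans hconj.symm, fun hg => hg.trans hconj⟩
    simp only [u, hmem]
  have hfu (j : J) : (Module.finrank ℂ (W j) : ℂ) • fourierTransform (σ j) u =
      (M.card * (σ j).character m₀⁻¹ : ℂ) • 1 := by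
    have := hσ.isIrreducible j
    rw [finrank_smul_fourierTransform (σ j) hu]
    congr 1
    rw [← Equiv.sum_comp (Equiv.inv G)]
    simp only [u, Equiv.inv_apply, inv_inv, ite_mul, one_mul, zero_mul, Finset.sum_ite_mem,
      Finset.univ_inter]
    rw [Finset.sum_congr rfl (hχ j), Finset.sum_const, nsmul_eq_mul]
  have key := hσ.sum_finrank_mul_trace_fourierTransform_mul u f
  simp only [u, inv_inv, ite_mul, one_mul, zero_mul, Finset.sum_ite_mem, Finset.univ_inter] at key
  rw [← key, Finset.mul_sum]
  refine Finset.sum_congr rfl fun j _ => ?_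
  rw [← smul_eq_mul, ← map_smul, ← smul_mul_assoc, hfu, smul_one_mul, map_smul, smul_eq_mul,
    mul_assoc]

end IsCompleteFamily

section Unitary

variable {G H V : Type*} [Group G] [Group H] [NormedAddCommGroup V] [InnerProductSpace ℂ V]
  {ρ : Representation ℂ G V}

theorem IsUnitaryRep.comp (hρ : IsUnitaryRep ρ) (φ : H →* G) :
    IsUnitaryRep (MonoidHom.comp ρ φ : Representation ℂ H V) :=
  fun h => hρ (φ h)

theorem IsUnitaryRep.norm_map (hρ : IsUnitaryRep ρ) (g : G) (v : V) : ‖ρ g v‖ = ‖v‖ := by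
  rw [@norm_eq_sqrt_re_inner ℂ, hρ, ← @norm_eq_sqrt_re_inner ℂ]

theorem IsUnitaryRep.inner_map_left (hρ : IsUnitaryRep ρ) (g : G) (v w : V) :
    ⟪ρ g v, w⟫_ℂ = ⟪v, ρ g⁻¹ w⟫_ℂ := by
  rw [← hρ g v, Representation.self_inv_apply]

variable [FiniteDimensional ℂ V]

theorem IsUnitaryRep.norm_character_inv (hρ : IsUnitaryRep ρ) (g : G) :
    ‖ρ.character g⁻¹‖ = ‖ρ.character g‖ := by
  have h : ρ.character g⁻¹ = starRingEnd ℂ (ρ.character g) := by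
    simp only [Representation.character,
      LinearMap.trace_eq_sum_inner _ (stdOrthonormalBasis ℂ V), map_sum, inner_conj_symm,
      hρ.inner_map_left]
  rw [h, RCLike.norm_conj]

theorem IsUnitaryRep.norm_character_le (hρ : IsUnitaryRep ρ) (g : G) :
    ‖ρ.character g‖ ≤ Module.finrank ℂ V := by
  let b := stdOrthonormalBasis ℂ V
  calc ‖ρ.character g‖ = ‖∑ i, ⟪b i, ρ g (b i)⟫_ℂ‖ := by
        rw [Representation.character, LinearMap.trace_eq_sum_inner _ b]
    _ ≤ ∑ i, ‖b i‖ * ‖ρ g (b i)‖ := norm_sum_le_of_le _ fun i _ => norm_inner_le_norm _ _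
    _ = Module.finrank ℂ V := by simp [hρ.norm_map, b.norm_eq_one]

theorem IsUnitaryRep.norm_trace_fourierTransform_le [Fintype G] (hρ : IsUnitaryRep ρ)
    (f : G → ℂ) :
    ‖LinearMap.trace ℂ V (fourierTransform ρ f)‖ ≤ Module.finrank ℂ V * ∑ g, ‖f g‖ := by
  rw [trace_fourierTransform, Finset.mul_sum]
  refine norm_sum_le_of_le _ fun g _ => ?_
  rw [norm_mul, mul_comm]
  exact mul_le_mul_of_nonneg_right (hρ.norm_character_le g) (norm_nonneg _)

theorem IsUnitaryRep.norm_character_mul_norm_trace_le [Fintype G] (hρ : IsUnitaryRep ρ) (g : G)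
    (f : G → ℂ) :
    ‖ρ.character g‖ * ‖LinearMap.trace ℂ V (fourierTransform ρ f)‖ ≤
      (Module.finrank ℂ V : ℝ) ^ 2 * ∑ h, ‖f h‖ := by
  rw [sq, mul_assoc]
  exact mul_le_mul (hρ.norm_character_le g) (hρ.norm_trace_fourierTransform_le f)
    (norm_nonneg _) (Nat.cast_nonneg _)

theorem re_trace_mul_self_le {𝕜 E : Type*} [RCLike 𝕜] [NormedAddCommGroup E]
    [InnerProductSpace 𝕜 E] [FiniteDimensional 𝕜 E] {T : E →ₗ[𝕜] E} (hT : T.IsPositive) :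
    RCLike.re (LinearMap.trace 𝕜 E (T * T)) ≤ RCLike.re (LinearMap.trace 𝕜 E T) ^ 2 := by
  have hsymm := hT.isSymmetric
  have htrace : RCLike.re (LinearMap.trace 𝕜 E (T * T)) = ∑ i, hsymm.eigenvalues rfl i ^ 2 := by
    rw [LinearMap.trace_eq_sum_inner _ (hsymm.eigenvectorBasis rfl), map_sum]
    refine Finset.sum_congr rfl fun i _ => ?_
    simp [inner_smul_right, sq]
  rw [htrace, hsymm.re_trace_eq_sum_eigenvalues rfl]
  exact Finset.sum_sq_le_sq_sum_of_nonneg fun i _ => hT.nonneg_eigenvalues rfl i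

end Unitary

section PositiveDefinite

open scoped ComplexOrder

variable {G V : Type*} [Group G]

/-- A function `f` on a group is positive definite if the kernel `(a, b) ↦ f (a⁻¹ * b)` is
positive semidefinite. -/
def IsPositiveDefinite (f : G → ℂ) : Prop :=
  (Matrix.of fun a b => f (a⁻¹ * b)).PosSemidef

variable {f f₁ f₂ : G → ℂ}

theorem IsPositiveDefinite.mul (hf₁ : IsPositiveDefinite f₁) (hf₂ : IsPositiveDefinite f₂) :
    IsPositiveDefinite fun g => f₁ g * f₂ g :=
  Matrix.PosSemidef.hadamard hf₁ hf₂

theorem IsPositiveDefinite.map_inv (hf : IsPositiveDefinite f) (g : G) :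
    f g⁻¹ = starRingEnd ℂ (f g) := by
  simpa using (hf.isHermitian.apply g 1).symm

theorem IsPositiveDefinite.conj (hf : IsPositiveDefinite f) :
    IsPositiveDefinite fun g => starRingEnd ℂ (f g) := by
  have h : Matrix.of (fun a b => starRingEnd ℂ (f (a⁻¹ * b))) =
      (Matrix.of fun a b => f (a⁻¹ * b)).transpose := by
    ext a b
    simp [← hf.map_inv]
  rw [IsPositiveDefinite, h]
  exact Matrix.PosSemidef.transpose hf

theorem IsPositiveDefinite.norm_sq (hf : IsPositiveDefinite f) :
    IsPositiveDefinite fun g => ((‖f g‖ ^ 2 : ℝ) : ℂ) := by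
  simpa [Complex.mul_conj'] using hf.mul hf.conj

theorem IsPositiveDefinite.sum_nonneg [Fintype G] (hf : IsPositiveDefinite f) :
    0 ≤ ∑ g, f g := by
  have h := hf.dotProduct_mulVec_nonneg 1
  have hsum : star (1 : G → ℂ) ⬝ᵥ (Matrix.of fun a b => f (a⁻¹ * b)).mulVec 1 =
      Fintype.card G * ∑ g, f g := by
    have htrans (a : G) : ∑ b, f (a⁻¹ * b) = ∑ g, f g := Equiv.sum_comp (Equiv.mulLeft a⁻¹) f
    simp [dotProduct, Matrix.mulVec, htrans]
  rw [hsum] at h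
  have hcard : (0 : ℂ) < Fintype.card G := Nat.cast_pos.mpr Fintype.card_pos
  exact le_of_mul_le_mul_of_pos_left (by rwa [mul_zero]) hcard

variable [NormedAddCommGroup V] [InnerProductSpace ℂ V] {ρ : Representation ℂ G V}

theorem IsUnitaryRep.isPositiveDefinite_inner [Finite G] (hρ : IsUnitaryRep ρ) (v : V) :
    IsPositiveDefinite fun g => ⟪v, ρ g v⟫_ℂ := by
  have h : Matrix.of (fun a b => ⟪v, ρ (a⁻¹ * b) v⟫_ℂ) = Matrix.gram ℂ fun g => ρ g v := by
    ext a b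
    simp [hρ.inner_map_left]
  rw [IsPositiveDefinite, h]
  exact Matrix.posSemidef_gram ℂ _

theorem IsPositiveDefinite.isPositive_fourierTransform [Fintype G] (hf : IsPositiveDefinite f)
    (hρ : IsUnitaryRep ρ) : (fourierTransform ρ f).IsPositive := by
  refine (LinearMap.isPositive_iff_complex _).mpr fun v => ?_
  have hinner : 0 ≤ ⟪fourierTransform ρ f v, v⟫_ℂ := by
    rw [← inner_conj_symm, starRingEnd_apply, star_nonneg_iff]
    simpa [fourierTransform_apply, inner_sum, inner_smul_right] using
      (hf.mul (hρ.isPositiveDefinite_inner v)).sum_nonneg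
  exact ⟨(Complex.eq_re_of_ofReal_le hinner).symm, (Complex.nonneg_iff.mp hinner).1⟩

theorem IsPositiveDefinite.norm_trace_fourierTransform [Fintype G] [FiniteDimensional ℂ V]
    (hf : IsPositiveDefinite f) (hρ : IsUnitaryRep ρ) :
    ‖LinearMap.trace ℂ V (fourierTransform ρ f)‖ =
      (LinearMap.trace ℂ V (fourierTransform ρ f)).re :=
  (Complex.re_eq_norm.mpr (hf.isPositive_fourierTransform hρ).trace_nonneg).symm

end PositiveDefinite

namespace IsCompleteFamily

variable {G : Type*} [Group G] [Fintype G] {J : Type*} [Fintype J]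
  {W : J → Type*} [∀ j, NormedAddCommGroup (W j)] [∀ j, InnerProductSpace ℂ (W j)]
  [∀ j, FiniteDimensional ℂ (W j)] {σ : ∀ j, Representation ℂ G (W j)}

theorem sum_finrank_mul_norm_trace (hσ : IsCompleteFamily W σ) {f : G → ℂ}
    (hf : IsPositiveDefinite f) :
    ∑ j, (Module.finrank ℂ (W j) : ℝ) * ‖LinearMap.trace ℂ (W j) (fourierTransform (σ j) f)‖ =
      Fintype.card G * (f 1).re := by
  simpa [hf.norm_trace_fourierTransform (hσ.isUnitaryRep _)] using
    congrArg Complex.re (hσ.sum_finrank_mul_trace_fourierTransform f)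

theorem sum_norm_sq_le (hσ : IsCompleteFamily W σ) {f : G → ℂ} (hf : IsPositiveDefinite f) :
    ∑ g, ‖f g‖ ^ 2 ≤
      (f 1).re * ∑ j, ‖LinearMap.trace ℂ (W j) (fourierTransform (σ j) f)‖ := by
  set t : J → ℝ := fun j => ‖LinearMap.trace ℂ (W j) (fourierTransform (σ j) f)‖
  have htrace (j : J) : (Module.finrank ℂ (W j) : ℝ) *
      (LinearMap.trace ℂ (W j) (fourierTransform (σ j) f * fourierTransform (σ j) f)).re ≤
        Fintype.card G * (f 1).re * t j := by
    have hj : (Module.finrank ℂ (W j) : ℝ) * t j ≤ Fintype.card G * (f 1).re :=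
      hσ.sum_finrank_mul_norm_trace hf ▸ Finset.single_le_sum
        (f := fun j => (Module.finrank ℂ (W j) : ℝ) * t j)
        (fun i _ => by positivity) (Finset.mem_univ j)
    have hpos := hf.isPositive_fourierTransform (hσ.isUnitaryRep j)
    have hsq := re_trace_mul_self_le hpos
    rw [RCLike.re_to_complex, RCLike.re_to_complex,
      ← hf.norm_trace_fourierTransform (hσ.isUnitaryRep j)] at hsq
    calc _ ≤ (Module.finrank ℂ (W j) : ℝ) * t j ^ 2 := by gcongr
      _ = (Module.finrank ℂ (W j) : ℝ) * t j * t j := by ring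
      _ ≤ _ := by gcongr
  have hplancherel : ∑ j, (Module.finrank ℂ (W j) : ℝ) *
      (LinearMap.trace ℂ (W j) (fourierTransform (σ j) f * fourierTransform (σ j) f)).re =
        Fintype.card G * ∑ g, ‖f g‖ ^ 2 := by
    have h := congrArg Complex.re (hσ.sum_finrank_mul_trace_fourierTransform_mul f f)
    simp only [hf.map_inv, Complex.conj_mul'] at h
    simpa [← Complex.ofReal_pow] using h
  refine le_of_mul_le_mul_left ?_ (Nat.cast_pos.mpr (Fintype.card_pos (α := G)) : (0 : ℝ) < _)
  rw [← hplancherel, ← mul_assoc, Finset.mul_sum]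
  exact Finset.sum_le_sum fun j _ => htrace j

theorem card_mul_norm_sum_conjClass_le (hσ : IsCompleteFamily W σ) {M : Finset G} {m₀ : G}
    (hM : ∀ m, m ∈ M ↔ IsConj m₀ m) (f : G → ℂ) :
    Fintype.card G * ‖∑ m ∈ M, f m‖ ≤ M.card * ∑ j, ‖(σ j).character m₀‖ *
      ‖LinearMap.trace ℂ (W j) (fourierTransform (σ j) f)‖ := by
  have h := congrArg norm (hσ.card_mul_sum_conjClass hM f)
  rw [norm_mul, norm_mul, Complex.norm_natCast, Complex.norm_natCast] at h
  rw [h]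
  gcongr
  refine norm_sum_le_of_le _ fun j _ => ?_
  rw [norm_mul, (hσ.isUnitaryRep j).norm_character_inv]

end IsCompleteFamily

section ConjClass

variable {G : Type*} [Group G] [Fintype G] {J : Type*} [Finite J]
  {W : J → Type*} [∀ j, NormedAddCommGroup (W j)] [∀ j, InnerProductSpace ℂ (W j)]
  [∀ j, FiniteDimensional ℂ (W j)] {σ : ∀ j, Representation ℂ G (W j)}

theorem IsCompleteFamily.norm_sum_conjClass_le (hσ : IsCompleteFamily W σ) {M : Finset G} {m₀ : G}
    (hM : ∀ m, m ∈ M ↔ IsConj m₀ m) {Λ : Finset J} {lam : ℝ} (hlam : 0 ≤ lam)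
    (hΛ : ∀ j ∉ Λ, ‖(σ j).character m₀‖ ≤ lam * Module.finrank ℂ (W j))
    {f : G → ℂ} (hf : IsPositiveDefinite f) :
    ‖∑ m ∈ M, f m‖ ≤ M.card * (lam * (f 1).re +
      (∑ j ∈ Λ, (Module.finrank ℂ (W j) : ℝ) ^ 2 / Fintype.card G) * ∑ g, ‖f g‖) := by
  classical
  have := Fintype.ofFinite J
  set t : J → ℝ := fun j => ‖LinearMap.trace ℂ (W j) (fourierTransform (σ j) f)‖
  have hterm (j : J) : ‖(σ j).character m₀‖ * t j ≤ lam * (Module.finrank ℂ (W j) * t j) +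
      if j ∈ Λ then (Module.finrank ℂ (W j) : ℝ) ^ 2 * ∑ g, ‖f g‖ else 0 := by
    split_ifs with hj
    · exact ((hσ.isUnitaryRep j).norm_character_mul_norm_trace_le m₀ f).trans
        (le_add_of_nonneg_left (by positivity))
    · rw [add_zero, ← mul_assoc]
      exact mul_le_mul_of_nonneg_right (hΛ j hj) (norm_nonneg _)
  have hG : (0 : ℝ) < Fintype.card G := Nat.cast_pos.mpr Fintype.card_pos
  refine le_of_mul_le_mul_left ?_ hG
  calc Fintype.card G * ‖∑ m ∈ M, f m‖
      ≤ M.card * ∑ j, ‖(σ j).character m₀‖ * t j := hσ.card_mul_norm_sum_conjClass_le hM f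
    _ ≤ M.card * ∑ j, (lam * (Module.finrank ℂ (W j) * t j) +
          if j ∈ Λ then (Module.finrank ℂ (W j) : ℝ) ^ 2 * ∑ g, ‖f g‖ else 0) := by
        gcongr with j; exact hterm j
    _ = M.card * (lam * (Fintype.card G * (f 1).re) +
          (∑ j ∈ Λ, (Module.finrank ℂ (W j) : ℝ) ^ 2) * ∑ g, ‖f g‖) := by
        rw [Finset.sum_add_distrib, ← Finset.mul_sum, hσ.sum_finrank_mul_norm_trace hf,
          Finset.sum_ite_mem, Finset.univ_inter, ← Finset.sum_mul]
    _ = _ := by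
        rw [← Finset.sum_div]
        field_simp

end ConjClass

section Average

variable {G : Type*} [Group G] [Fintype G] {J : Type*} [Fintype J]
  {W : J → Type*} [∀ j, NormedAddCommGroup (W j)] [∀ j, InnerProductSpace ℂ (W j)]
  [∀ j, FiniteDimensional ℂ (W j)] {σ : ∀ j, Representation ℂ G (W j)}
  {P : Type*} [Fintype P] {w : P → ℝ} {f : P → G → ℂ}

theorem IsCompleteFamily.sum_mul_sum_norm_sq_le [DecidableEq G] (hσ : IsCompleteFamily W σ)
    (hw : ∀ p, 0 ≤ w p) (hf : ∀ p, IsPositiveDefinite (f p)) (hf1 : ∀ p, f p 1 = 1)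
    (hδ : ∑ p, (w p : ℂ) • f p = Pi.single 1 1) :
    ∑ p, w p * ∑ g, ‖f p g‖ ^ 2 ≤ ∑ j, (Module.finrank ℂ (W j) : ℝ) := by
  have htrace (j : J) :
      ∑ p, w p * ‖LinearMap.trace ℂ (W j) (fourierTransform (σ j) (f p))‖ =
        Module.finrank ℂ (W j) := by
    have h := congrArg (fun u => (LinearMap.trace ℂ (W j) (fourierTransform (σ j) u)).re) hδ
    simpa [(hf _).norm_trace_fourierTransform (hσ.isUnitaryRep j),
      fourierTransform_single_one] using h
  calc ∑ p, w p * ∑ g, ‖f p g‖ ^ 2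
      ≤ ∑ p, w p * ∑ j, ‖LinearMap.trace ℂ (W j) (fourierTransform (σ j) (f p))‖ := by
        gcongr with p
        · exact hw p
        · simpa [hf1] using hσ.sum_norm_sq_le (hf p)
    _ = ∑ j, (Module.finrank ℂ (W j) : ℝ) := by
        simp only [Finset.mul_sum]
        rw [Finset.sum_comm]
        exact Finset.sum_congr rfl fun j _ => htrace j

theorem IsCompleteFamily.sum_mul_average_norm_sq_le [DecidableEq G] (hσ : IsCompleteFamily W σ)
    {M : Finset G} {m₀ : G} (hM : ∀ m, m ∈ M ↔ IsConj m₀ m) {Λ : Finset J} {lam : ℝ}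
    (hlam : 0 ≤ lam) (hΛ : ∀ j ∉ Λ, ‖(σ j).character m₀‖ ≤ lam * Module.finrank ℂ (W j))
    (hw : ∀ p, 0 ≤ w p) (hf : ∀ p, IsPositiveDefinite (f p)) (hf1 : ∀ p, f p 1 = 1)
    (hδ : ∑ p, (w p : ℂ) • f p = Pi.single 1 1) :
    ∑ p, w p * (1 / (M.card : ℝ) * ∑ m ∈ M, ‖f p m‖ ^ 2) ≤
      lam + (∑ j ∈ Λ, (Module.finrank ℂ (W j) : ℝ) ^ 2 / Fintype.card G) *
        ∑ j, (Module.finrank ℂ (W j) : ℝ) := by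
  set PΛ : ℝ := ∑ j ∈ Λ, (Module.finrank ℂ (W j) : ℝ) ^ 2 / Fintype.card G
  have hPΛ : 0 ≤ PΛ := Finset.sum_nonneg fun j _ => by positivity
  have hcard : (0 : ℝ) < M.card :=
    Nat.cast_pos.mpr (Finset.card_pos.mpr ⟨m₀, (hM m₀).mpr (.refl m₀)⟩)
  have hclass (p : P) :
      1 / (M.card : ℝ) * ∑ m ∈ M, ‖f p m‖ ^ 2 ≤ lam + PΛ * ∑ g, ‖f p g‖ ^ 2 := by
    rw [one_div, inv_mul_le_iff₀ hcard]
    have h := hσ.norm_sum_conjClass_le hM hlam hΛ (hf p).norm_sq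
    rw [← Complex.ofReal_sum, Complex.norm_of_nonneg (by positivity)] at h
    simpa [hf1] using h
  have hsum : ∑ p, w p = 1 := by
    have h1 := congrFun hδ 1
    simp only [Finset.sum_apply, Pi.smul_apply, hf1, Pi.single_eq_same, smul_eq_mul, mul_one] at h1
    exact_mod_cast h1
  calc ∑ p, w p * (1 / (M.card : ℝ) * ∑ m ∈ M, ‖f p m‖ ^ 2)
      ≤ ∑ p, w p * (lam + PΛ * ∑ g, ‖f p g‖ ^ 2) := by
        gcongr with p
        · exact hw p
        · exact hclass p
    _ = lam + PΛ * ∑ p, w p * ∑ g, ‖f p g‖ ^ 2 := by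
        simp only [mul_add, mul_left_comm _ PΛ, Finset.sum_add_distrib, ← Finset.sum_mul,
          ← Finset.mul_sum, hsum, one_mul]
    _ ≤ lam + PΛ * ∑ j, (Module.finrank ℂ (W j) : ℝ) :=
        add_le_add le_rfl
          (mul_le_mul_of_nonneg_left (hσ.sum_mul_sum_norm_sq_le hw hf hf1 hδ) hPΛ)

end Average

section Plancherel

variable {G H : Type*} [Group G] [Fintype G] [Group H] [Fintype H]
  {J : Type*} [Fintype J] {W : J → Type*} [∀ j, NormedAddCommGroup (W j)]
  [∀ j, InnerProductSpace ℂ (W j)] [∀ j, FiniteDimensional ℂ (W j)]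
  {σ : ∀ j, Representation ℂ G (W j)} {T : Type*} [Fintype T]
  {V : T → Type*} [∀ i, NormedAddCommGroup (V i)] [∀ i, InnerProductSpace ℂ (V i)]
  [∀ i, FiniteDimensional ℂ (V i)] {ρ : ∀ i, Representation ℂ H (V i)}
  {ι : T → Type*} [∀ i, Fintype (ι i)]

/-- The mass `dim V / |H|` that each vector of an orthonormal basis of `V` receives when the
Plancherel mass `(dim V)² / |H|` of an irreducible representation of `H` on `V` is distributed
evenly over that basis. -/
def plancherelWeight (H V : Type*) [Fintype H] [AddCommGroup V] [Module ℂ V] : ℝ :=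
  Module.finrank ℂ V / Fintype.card H

theorem plancherelWeight_nonneg (H V : Type*) [Fintype H] [AddCommGroup V] [Module ℂ V] :
    0 ≤ plancherelWeight H V := by
  unfold plancherelWeight; positivity

theorem IsCompleteFamily.sum_mul_average_eq_sum_plancherelWeight
    (hρ : IsCompleteFamily V ρ) (X : ∀ i, ι i → ℝ) :
    ∑ i, (Module.finrank ℂ (V i) : ℝ) ^ 2 / Fintype.card H *
        (1 / (Module.finrank ℂ (V i) : ℝ) * ∑ x, X i x) =
      ∑ p : Σ i, ι i, plancherelWeight H (V p.1) * X p.1 p.2 := by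
  rw [Fintype.sum_sigma]
  refine Finset.sum_congr rfl fun i _ => ?_
  have hd : (Module.finrank ℂ (V i) : ℝ) ≠ 0 := by exact_mod_cast hρ.finrank_ne_zero i
  change _ = ∑ x, plancherelWeight H (V i) * X i x
  rw [← Finset.mul_sum, plancherelWeight]
  field_simp

theorem IsCompleteFamily.sum_plancherelWeight_mul_inner [DecidableEq H]
    (hρ : IsCompleteFamily V ρ) (B : ∀ i, OrthonormalBasis (ι i) ℂ (V i)) (h : H) :
    ∑ p : Σ i, ι i, (plancherelWeight H (V p.1) : ℂ) * ⟪B p.1 p.2, ρ p.1 h (B p.1 p.2)⟫_ℂ =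
      if h = 1 then 1 else 0 := by
  have hcard : (Fintype.card H : ℂ) ≠ 0 := Nat.cast_ne_zero.mpr Fintype.card_ne_zero
  have hchar (i : T) : ∑ x, (plancherelWeight H (V i) : ℂ) * ⟪B i x, ρ i h (B i x)⟫_ℂ =
      (Fintype.card H : ℂ)⁻¹ * ((Module.finrank ℂ (V i) : ℂ) * (ρ i).character h) := by
    rw [← Finset.mul_sum, ← LinearMap.trace_eq_sum_inner, plancherelWeight,
      Representation.character]
    push_cast
    ring
  rw [Fintype.sum_sigma, Finset.sum_congr rfl fun i _ => hchar i, ← Finset.mul_sum,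
    hρ.sum_finrank_mul_character, mul_ite, mul_zero, inv_mul_cancel₀ hcard]

theorem IsCompleteFamily.sum_plancherelWeight_mul_average_norm_sq_le
    (hσ : IsCompleteFamily W σ) {M : Finset G} {m₀ : G} (hM : ∀ m, m ∈ M ↔ IsConj m₀ m)
    {Λ : Finset J} {lam : ℝ} (hlam : 0 ≤ lam)
    (hΛ : ∀ j ∉ Λ, ‖(σ j).character m₀‖ ≤ lam * Module.finrank ℂ (W j))
    (hρ : IsCompleteFamily V ρ) (B : ∀ i, OrthonormalBasis (ι i) ℂ (V i))
    {φ : G →* H} (hφ : Function.Injective φ) :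
    ∑ p : Σ i, ι i, plancherelWeight H (V p.1) *
        (1 / (M.card : ℝ) * ∑ m ∈ M, ‖⟪B p.1 p.2, ρ p.1 (φ m) (B p.1 p.2)⟫_ℂ‖ ^ 2) ≤
      lam + (∑ j ∈ Λ, (Module.finrank ℂ (W j) : ℝ) ^ 2 / Fintype.card G) *
        ∑ j, (Module.finrank ℂ (W j) : ℝ) := by
  classical
  refine hσ.sum_mul_average_norm_sq_le hM hlam hΛ
    (w := fun p : Σ i, ι i => plancherelWeight H (V p.1)) (fun _ => plancherelWeight_nonneg _ _)
    (f := fun p g => ⟪B p.1 p.2, ρ p.1 (φ g) (B p.1 p.2)⟫_ℂ)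
    (fun p => ((hρ.isUnitaryRep p.1).comp φ).isPositiveDefinite_inner _)
    (fun p => by simp [(B p.1).norm_eq_one]) (funext fun g => ?_)
  simp [hρ.sum_plancherelWeight_mul_inner, Pi.single_apply, map_eq_one_iff φ hφ]

end Plancherel

section Variance

variable {α β : Type*}

/-- The variance of `X` under the uniform distribution on `s`. -/
def uniformVariance (s : Finset α) (X : α → ℝ) : ℝ :=
  1 / (s.card : ℝ) * ∑ a ∈ s, X a ^ 2 - (1 / (s.card : ℝ) * ∑ a ∈ s, X a) ^ 2

theorem uniformVariance_congr {s : Finset α} {X Y : α → ℝ} (h : ∀ a ∈ s, X a = Y a) :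
    uniformVariance s X = uniformVariance s Y := by
  rw [uniformVariance, uniformVariance, Finset.sum_congr rfl h,
    Finset.sum_congr rfl fun a ha => congrArg (· ^ 2) (h a ha)]

theorem uniformVariance_eq_sum_sq_sub (s : Finset α) (X : α → ℝ) :
    uniformVariance s X = 1 / (2 * (s.card : ℝ) ^ 2) * ∑ a ∈ s, ∑ b ∈ s, (X a - X b) ^ 2 := by
  obtain rfl | hs := s.eq_empty_or_nonempty
  · simp [uniformVariance]
  have hcard : (s.card : ℝ) ≠ 0 := Nat.cast_ne_zero.mpr hs.card_ne_zero
  simp only [uniformVariance, sub_sq, Finset.sum_add_distrib, Finset.sum_sub_distrib,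
    Finset.sum_const, nsmul_eq_mul, ← Finset.mul_sum, ← Finset.sum_mul]
  field_simp
  ring

theorem uniformVariance_le_average_sq (s : Finset α) (X : α → ℝ) :
    uniformVariance s X ≤ 1 / (s.card : ℝ) * ∑ a ∈ s, X a ^ 2 :=
  sub_le_self _ (sq_nonneg _)

theorem uniformVariance_const (s : Finset α) (c : ℝ) : uniformVariance s (fun _ => c) = 0 := by
  simp [uniformVariance_eq_sum_sq_sub]

theorem convexOn_uniformVariance (s : Finset α) :
    ConvexOn ℝ Set.univ (uniformVariance s : (α → ℝ) → ℝ) := by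
  refine ⟨convex_univ, fun X _ Y _ a b ha hb hab => ?_⟩
  simp only [uniformVariance_eq_sum_sq_sub, smul_eq_mul, mul_left_comm _ (1 / (2 * _ : ℝ)),
    ← mul_add, Finset.mul_sum _ _ a, Finset.mul_sum _ _ b, ← Finset.sum_add_distrib]
  gcongr with x _ y _
  have h : (a * (X x - X y) + b * (Y x - Y y)) ^ 2 ≤
      a * (X x - X y) ^ 2 + b * (Y x - Y y) ^ 2 :=
    (even_two.convexOn_pow (𝕜 := ℝ)).2 (Set.mem_univ _) (Set.mem_univ _) ha hb hab
  refine le_of_eq_of_le ?_ h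
  simp only [Pi.add_apply, Pi.smul_apply, smul_eq_mul]
  ring

theorem uniformVariance_average_le [Fintype β] [Nonempty β] (s : Finset α) (X : β → α → ℝ) :
    uniformVariance s (fun a => (Fintype.card β : ℝ)⁻¹ * ∑ b, X b a) ≤
      (Fintype.card β : ℝ)⁻¹ * ∑ b, uniformVariance s (X b) := by
  have h := (convexOn_uniformVariance s).map_sum_le (t := Finset.univ)
    (w := fun _ : β => (Fintype.card β : ℝ)⁻¹) (p := X) (fun _ _ => by positivity)
    (by simp) (fun _ _ => Set.mem_univ _)
  have hX : (fun a => (Fintype.card β : ℝ)⁻¹ * ∑ b, X b a) = ∑ b, (Fintype.card β : ℝ)⁻¹ • X b := by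
    ext a
    simp [Finset.mul_sum]
  rwa [hX, Finset.mul_sum]

end Variance

section InvProj

variable {G : Type*} {k : ℕ}

theorem onI_empty [One G] (g : G) : onI g (∅ : Finset (Fin k)) = 1 := by
  funext i
  simp [onI]

theorem onI_mul_onI [MulOneClass G] {m : G} (hm : m * m = 1) (I J : Finset (Fin k)) :
    onI m I * onI m J = onI m (symmDiff I J) := by
  funext i
  by_cases hI : i ∈ I <;> by_cases hJ : i ∈ J <;> simp [onI, Finset.mem_symmDiff, hI, hJ, hm]

/-- `onI` with a fixed index set, as a homomorphism from `G` to its `k`-th power. -/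
def onIHom [MulOneClass G] (I : Finset (Fin k)) : G →* (Fin k → G) where
  toFun g := onI g I
  map_one' := by funext i; simp [onI]
  map_mul' g h := by funext i; by_cases hi : i ∈ I <;> simp [onI, hi]

theorem onIHom_injective [MulOneClass G] {I : Finset (Fin k)} (hI : I.Nonempty) :
    Function.Injective (onIHom I : G →* (Fin k → G)) := by
  obtain ⟨i, hi⟩ := hI
  intro g h hgh
  simpa [onIHom, onI, hi] using congrFun hgh i

theorem apply_onI_invProj [Group G] {V : Type*} [AddCommGroup V] [Module ℂ V]
    (ρ : Representation ℂ (Fin k → G) V) {m : G} (hm : m * m = 1) (I : Finset (Fin k)) (v : V) :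
    ρ (onI m I) (invProj ρ m v) = invProj ρ m v := by
  have hsum : ∑ J, ρ (onI m I * onI m J) v = ∑ J, ρ (onI m J) v := by
    simp only [onI_mul_onI hm]
    exact Equiv.sum_comp (symmDiff_right_involutive I).toPerm fun J => ρ (onI m J) v
  simpa [invProj] using congrArg (((2 : ℂ) ^ k)⁻¹ • ·) hsum

theorem IsUnitaryRep.norm_sq_invProj [Group G] {V : Type*} [NormedAddCommGroup V]
    [InnerProductSpace ℂ V] {ρ : Representation ℂ (Fin k → G) V} (hρ : IsUnitaryRep ρ) {m : G}
    (hm : m * m = 1) (v : V) :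
    ‖invProj ρ m v‖ ^ 2 = ((2 : ℝ) ^ k)⁻¹ * ∑ I : Finset (Fin k), (⟪v, ρ (onI m I) v⟫_ℂ).re := by
  have hexp (w : V) : ⟪w, invProj ρ m v⟫_ℂ =
      (((2 : ℝ) ^ k)⁻¹ : ℝ) * ∑ I : Finset (Fin k), ⟪w, ρ (onI m I) v⟫_ℂ := by
    simp [invProj]
  have hfix (I : Finset (Fin k)) : ⟪invProj ρ m v, ρ (onI m I) v⟫_ℂ = ⟪invProj ρ m v, v⟫_ℂ := by
    rw [← hρ (onI m I) _ v, apply_onI_invProj ρ hm]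
  have hself : ⟪invProj ρ m v, invProj ρ m v⟫_ℂ = ⟪invProj ρ m v, v⟫_ℂ := by
    rw [hexp]
    simp [hfix]
  rw [@norm_sq_eq_re_inner ℂ, hself, inner_re_symm, hexp, RCLike.re_to_complex,
    Complex.re_ofReal_mul, Complex.re_sum]

theorem IsUnitaryRep.uniformVariance_norm_sq_invProj_le [Group G] {V : Type*}
    [NormedAddCommGroup V] [InnerProductSpace ℂ V] {ρ : Representation ℂ (Fin k → G) V}
    (hρ : IsUnitaryRep ρ) {M : Finset G} (hM : ∀ m ∈ M, m * m = 1) (v : V) :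
    uniformVariance M (fun m => ‖invProj ρ m v‖ ^ 2) ≤ ((2 : ℝ) ^ k)⁻¹ *
      ∑ I : Finset (Fin k), uniformVariance M fun m => (⟪v, ρ (onI m I) v⟫_ℂ).re := by
  rw [uniformVariance_congr fun m hm => hρ.norm_sq_invProj (hM m hm) v]
  simpa using uniformVariance_average_le M fun (I : Finset (Fin k)) m => (⟪v, ρ (onI m I) v⟫_ℂ).re

end InvProj

section PowerGroup

variable {G : Type*} [Group G] [Fintype G] {J : Type*} [Fintype J]
  {W : J → Type*} [∀ j, NormedAddCommGroup (W j)] [∀ j, InnerProductSpace ℂ (W j)]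
  [∀ j, FiniteDimensional ℂ (W j)] {σ : ∀ j, Representation ℂ G (W j)}
  {k : ℕ} {T : Type*} [Fintype T]
  {V : T → Type*} [∀ i, NormedAddCommGroup (V i)] [∀ i, InnerProductSpace ℂ (V i)]
  [∀ i, FiniteDimensional ℂ (V i)] {ρ : ∀ i, Representation ℂ (Fin k → G) (V i)}
  {ι : T → Type*} [∀ i, Fintype (ι i)]

theorem IsCompleteFamily.sum_plancherelWeight_mul_uniformVariance_onI_le
    (hσ : IsCompleteFamily W σ) {M : Finset G} {m₀ : G} (hM : ∀ m, m ∈ M ↔ IsConj m₀ m)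
    {Λ : Finset J} {lam : ℝ} (hlam : 0 ≤ lam)
    (hΛ : ∀ j ∉ Λ, ‖(σ j).character m₀‖ ≤ lam * Module.finrank ℂ (W j))
    (hρ : IsCompleteFamily V ρ) (B : ∀ i, OrthonormalBasis (ι i) ℂ (V i)) (I : Finset (Fin k)) :
    ∑ p : Σ i, ι i, plancherelWeight (Fin k → G) (V p.1) *
        uniformVariance M (fun m => (⟪B p.1 p.2, ρ p.1 (onI m I) (B p.1 p.2)⟫_ℂ).re) ≤
      lam + (∑ j ∈ Λ, (Module.finrank ℂ (W j) : ℝ) ^ 2 / Fintype.card G) *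
        ∑ j, (Module.finrank ℂ (W j) : ℝ) := by
  obtain rfl | hI := I.eq_empty_or_nonempty
  · simp only [onI_empty, uniformVariance_const, mul_zero, Finset.sum_const_zero]
    positivity
  refine le_trans (Finset.sum_le_sum fun p _ => ?_)
    (hσ.sum_plancherelWeight_mul_average_norm_sq_le hM hlam hΛ hρ B (onIHom_injective hI))
  refine mul_le_mul_of_nonneg_left ?_ (plancherelWeight_nonneg _ _)
  refine (uniformVariance_le_average_sq M _).trans ?_
  gcongr 1 / _ * ∑ m ∈ M, ?_ with m
  exact sq_le_sq.mpr ((Complex.abs_re_le_norm _).trans_eq (abs_norm _).symm)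

end PowerGroup

/-- Variance bound (Lemma 9 of the paper): the Plancherel- and basis-average of
`Var_m ‖Π_m^{(i)} b‖²` is at most `λ + P(Λ) Σ_j d_j`. -/
theorem stmt14 {G : Type*} [Group G] [Fintype G]
    {J : Type*} [Fintype J]
    (W : J → Type*) [∀ j, NormedAddCommGroup (W j)] [∀ j, InnerProductSpace ℂ (W j)]
    [∀ j, FiniteDimensional ℂ (W j)]
    (σ : ∀ j, Representation ℂ G (W j)) (hfam : IsCompleteFamily W σ)
    (M : Finset G) (m₀ : G) (hm₀M : m₀ ∈ M)
    (hM : ∀ m : G, m ∈ M ↔ IsConj m₀ m)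
    (hinv : ∀ m ∈ M, m * m = 1 ∧ m ≠ 1)
    {k : ℕ} (hk : 1 ≤ k)
    {T : Type*} [Fintype T]
    (Vi : T → Type*) [∀ i, NormedAddCommGroup (Vi i)] [∀ i, InnerProductSpace ℂ (Vi i)]
    [∀ i, FiniteDimensional ℂ (Vi i)]
    (ρi : ∀ i, Representation ℂ (Fin k → G) (Vi i)) (hfam' : IsCompleteFamily Vi ρi)
    (ι : T → Type*) [∀ i, Fintype (ι i)] (B : ∀ i, OrthonormalBasis (ι i) ℂ (Vi i))
    (Λ : Finset J) (lam : ℝ) (hlam : 0 ≤ lam)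
    (hΛ : ∀ j ∉ Λ, ‖repChar (σ j) m₀‖ ≤ lam * (Module.finrank ℂ (W j) : ℝ)) :
    ∑ i, (Module.finrank ℂ (Vi i) : ℝ) ^ 2 / (Fintype.card G : ℝ) ^ k *
        ((1 / (Module.finrank ℂ (Vi i) : ℝ)) *
          ∑ x : ι i,
            ((1 / (M.card : ℝ)) * ∑ m ∈ M, (‖invProj (ρi i) m (B i x)‖ ^ 2) ^ 2
              - ((1 / (M.card : ℝ)) * ∑ m ∈ M, ‖invProj (ρi i) m (B i x)‖ ^ 2) ^ 2))
      ≤ lam + (∑ j ∈ Λ, (Module.finrank ℂ (W j) : ℝ) ^ 2 / (Fintype.card G : ℝ)) *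
          ∑ j, (Module.finrank ℂ (W j) : ℝ) := by
  set R : ℝ := lam + (∑ j ∈ Λ, (Module.finrank ℂ (W j) : ℝ) ^ 2 / (Fintype.card G : ℝ)) *
    ∑ j, (Module.finrank ℂ (W j) : ℝ)
  let X (I : Finset (Fin k)) (p : Σ i, ι i) (m : G) : ℝ :=
    (⟪B p.1 p.2, ρi p.1 (onI m I) (B p.1 p.2)⟫_ℂ).re
  have hcard : (Fintype.card G : ℝ) ^ k = Fintype.card (Fin k → G) := by simp
  calc _ = ∑ p : Σ i, ι i, plancherelWeight (Fin k → G) (Vi p.1) *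
          uniformVariance M (fun m => ‖invProj (ρi p.1) m (B p.1 p.2)‖ ^ 2) := by
        rw [hcard]
        exact hfam'.sum_mul_average_eq_sum_plancherelWeight fun i x =>
          uniformVariance M fun m => ‖invProj (ρi i) m (B i x)‖ ^ 2
    _ ≤ ∑ p : Σ i, ι i, plancherelWeight (Fin k → G) (Vi p.1) *
          (((2 : ℝ) ^ k)⁻¹ * ∑ I, uniformVariance M (X I p)) :=
        Finset.sum_le_sum fun p _ => mul_le_mul_of_nonneg_left
          ((hfam'.isUnitaryRep p.1).uniformVariance_norm_sq_invProj_le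
            (fun m hm => (hinv m hm).1) _) (plancherelWeight_nonneg _ _)
    _ = ((2 : ℝ) ^ k)⁻¹ * ∑ I, ∑ p : Σ i, ι i,
          plancherelWeight (Fin k → G) (Vi p.1) * uniformVariance M (X I p) := by
        rw [Finset.sum_comm, Finset.mul_sum]
        simp only [Finset.mul_sum, mul_left_comm]
    _ ≤ ((2 : ℝ) ^ k)⁻¹ * ∑ _I : Finset (Fin k), R := by
        gcongr with I
        exact hfam.sum_plancherelWeight_mul_uniformVariance_onI_le hM hlam hΛ hfam' B I
    _ = R := by simp
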